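/- arXiv:2211.10765 — 2 statements merged into one kernel-verified Lean document; each statement's English description precedes it below -/
import Mathlib

section
/- Let 0 ≤ α ≤ ω₁ and let {X_β : β ∈ A} be a family of topological spaces such that B_α(X_β, ℝ) is a Baire space for every β ∈ A. Then the product space ∏_{β∈A} B_α(X_β, ℝ) is a Baire space. -/
open Set Filter Topology Ordinal TopologicalSpace

/-- A map `φ : K → M` is *almost open* if the image of every nonempty open set
has nonempty interior. -/
def AlmostOpenMap {K M : Type*} [TopologicalSpace K] [TopologicalSpace M] (φ : K → M) : Prop :=
  ∀ V : Set K, IsOpen V → V.Nonempty → (interior (φ '' V)).Nonempty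

/-- The Baire class `B_α(X,Y)`: `B_0(X,Y)` is the set of continuous functions, and for `α > 0`,
`B_α(X,Y)` is the set of pointwise limits of sequences from `C(X,Y) ∪ ⋃_{β<α} B_β(X,Y)`. -/
noncomputable def BaireClass (X Y : Type*) [TopologicalSpace X] [TopologicalSpace Y]
    (α : Ordinal.{0}) : Set (X → Y) :=
  if α = 0 then {f | Continuous f}
  else {f | ∃ g : ℕ → X → Y,
    (∀ n, Continuous (g n) ∨ ∃ β, ∃ _ : β < α, g n ∈ BaireClass X Y β) ∧
    ∀ x, Filter.Tendsto (fun n => g n x) Filter.atTop (nhds (f x))}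
termination_by α

/-- `B_α(X,Y)` for `0 ≤ α ≤ ω₁`, where `B_{ω₁}(X,Y) = ⋃_{β<ω₁} B_β(X,Y)`. -/
noncomputable def BaireFun (X Y : Type*) [TopologicalSpace X] [TopologicalSpace Y]
    (α : Ordinal.{0}) : Set (X → Y) :=
  if α = ω_ 1 then ⋃ β ∈ Set.Iio (ω_ 1 : Ordinal.{0}), BaireClass X Y β
  else BaireClass X Y α

/-!
A family `F` of real functions on `X` which contains the continuous functions and is closed under
continuous substitution is Baire if and only if, along every sequence of pairwise disjoint finite
subsets of `X`, some member of `F` is unbounded. Necessity is a category argument in `ℝ^X`. For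
sufficiency, dense open sets are met by successive corrections: total boundedness of `[-M, M]^K`
provides, before the earlier corrections are known, one finite set `Δ` of new coordinates which
suffices for all of them. A member `h` of `F` which is large on these sets `Δ` switches each
correction on, so that near any value of `h` only finitely many large corrections are active and
the limit is a continuous function of `(h x, x)`.

The combinatorial condition passes to the disjoint sum of the spaces by a diagonal argument, and
the functions on the disjoint sum realise the product of the families.
-/

section Box

variable {X Y : Type*} [PseudoMetricSpace Y]

/-- The basic neighbourhood of `v` in the topology of pointwise convergence which constrains the
coordinates in the finite set `K` up to an error `δ`. -/
def box (K : Finset X) (v : X → Y) (δ : ℝ) : Set (X → Y) :=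
  (K : Set X).pi fun x => Metric.ball (v x) δ

lemma isOpen_box (K : Finset X) (v : X → Y) (δ : ℝ) : IsOpen (box K v δ) :=
  isOpen_set_pi K.finite_toSet fun _ _ => Metric.isOpen_ball

lemma hasBasis_nhds_box (v : X → Y) :
    (𝓝 v).HasBasis (fun Kδ : Finset X × ℝ => 0 < Kδ.2) fun Kδ => box Kδ.1 v Kδ.2 := by
  rw [nhds_pi]
  refine (hasBasis_pi_same_index (fun x => Metric.nhds_basis_ball (x := v x)) ?_).to_hasBasis
    (fun Kδ hKδ => ⟨(hKδ.1.toFinset, Kδ.2), hKδ.2, by simp [box]⟩)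
    fun Kδ hδ => ⟨(Kδ.1, Kδ.2), ⟨Kδ.1.finite_toSet, hδ⟩, subset_rfl⟩
  intro K δ hK hδ
  obtain ⟨δ₀, hδ₀, hle⟩ : ∃ δ₀ > 0, ∀ x ∈ K, δ₀ ≤ δ x := by
    have hsmall : ∀ᶠ t in 𝓝[>] (0 : ℝ), ∀ x ∈ K, t ≤ δ x :=
      (eventually_all_finite hK).2 fun x hx =>
        (eventually_le_nhds (hδ x hx)).filter_mono nhdsWithin_le_nhds
    exact (eventually_mem_nhdsWithin.and hsmall).exists
  exact ⟨δ₀, hδ₀, fun x hx => Metric.ball_subset_ball (hle x hx)⟩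

lemma dense_iff_forall_box_inter_nonempty {S : Set (X → Y)} :
    Dense S ↔ ∀ (K : Finset X) (v : X → Y) (δ : ℝ), 0 < δ → (box K v δ ∩ S).Nonempty :=
  ⟨fun hS K v _ hδ => hS.inter_open_nonempty _ (isOpen_box K v _)
    ⟨v, fun _ _ => Metric.mem_ball_self hδ⟩,
    fun h v => (mem_closure_iff_nhds_basis' (hasBasis_nhds_box v)).2
      fun Kδ hδ => h Kδ.1 v Kδ.2 hδ⟩

/-- One choice of new constraints `(Δ, w, δ)` serves all targets `v ∈ V` simultaneously: after an
`ε`-perturbation on `K`, every function `δ`-close to the perturbed target on `K` and to `w` on `Δ`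
lies in `D`. -/
def Captures (D : Set (X → Y)) (K Δ : Finset X) (w : X → Y) (V : Set (X → Y)) (ε δ : ℝ) : Prop :=
  ∀ v ∈ V, ∃ v' ∈ box K v ε, box K v' δ ∩ box Δ w δ ⊆ D

variable [Nonempty Y] {D : Set (X → Y)} {ε : ℝ}

lemma exists_captures_of_finite (hD : IsOpen D) (hd : Dense D) (K : Finset X) (hε : 0 < ε)
    {V : Set (X → Y)} (hV : V.Finite) :
    ∃ (Δ : Finset X) (w : X → Y) (δ : ℝ), Disjoint K Δ ∧ 0 < δ ∧ Captures D K Δ w V ε δ := by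
  classical
  induction V, hV using Set.Finite.induction_on with
  | empty =>
    exact ⟨∅, fun _ => Classical.arbitrary Y, 1, Finset.disjoint_empty_right K, one_pos,
      fun _ h => h.elim⟩
  | @insert v₀ V _ _ ih =>
    obtain ⟨Δ, w, δ, hKΔ, hδ, hcap⟩ := ih
    obtain ⟨g₀, ⟨hg₀K, hg₀Δ⟩, hg₀D⟩ : ((box K v₀ ε ∩ box Δ w (δ / 2)) ∩ D).Nonempty := by
      refine hd.inter_open_nonempty _ ((isOpen_box _ _ _).inter (isOpen_box _ _ _))
        ⟨K.piecewise v₀ w, fun x hx => ?_, fun x hx => ?_⟩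
      · simpa [Finset.mem_coe.1 hx] using hε
      · simpa [Finset.disjoint_right.1 hKΔ hx] using hδ
    obtain ⟨⟨T, d⟩, hd₀, hTD⟩ := (hasBasis_nhds_box g₀).mem_iff.1 (hD.mem_nhds hg₀D)
    refine ⟨Δ ∪ T \ K, g₀, min (δ / 2) d, ?_, lt_min (half_pos hδ) hd₀, ?_⟩
    · exact Finset.disjoint_union_right.2 ⟨hKΔ, Finset.disjoint_sdiff⟩
    rintro v (rfl | hv)
    · refine ⟨g₀, hg₀K, fun g hg => hTD fun x hx => ?_⟩
      by_cases hxK : x ∈ K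
      · exact Metric.ball_subset_ball (min_le_right _ _) (hg.1 x hxK)
      · exact Metric.ball_subset_ball (min_le_right _ _)
          (hg.2 x (by simp [hxK, Finset.mem_coe.1 hx]))
    · obtain ⟨v', hv', hsub⟩ := hcap v hv
      refine ⟨v', hv', fun g hg => hsub ⟨fun x hx => ?_, fun x hx => ?_⟩⟩
      · exact (hg.1 x hx).trans_le ((min_le_left _ _).trans (half_le_self hδ.le))
      · have hgg₀ : dist (g x) (g₀ x) < δ / 2 :=
          (hg.2 x (by simp [Finset.mem_coe.1 hx])).trans_le (min_le_left _ _)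
        calc dist (g x) (w x) ≤ dist (g x) (g₀ x) + dist (g₀ x) (w x) := dist_triangle _ _ _
          _ < δ / 2 + δ / 2 := add_lt_add hgg₀ (hg₀Δ x hx)
          _ = δ := add_halves δ

lemma exists_captures_of_totallyBounded (hD : IsOpen D) (hd : Dense D) (K : Finset X) (hε : 0 < ε)
    {C : Set Y} (hC : TotallyBounded C) :
    ∃ (Δ : Finset X) (w : X → Y) (δ : ℝ), Disjoint K Δ ∧ 0 < δ ∧
      Captures D K Δ w ((K : Set X).pi fun _ => C) ε δ := by
  obtain ⟨t, ht, hCt⟩ := Metric.totallyBounded_iff.1 hC (ε / 2) (half_pos hε)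
  have := ht.to_subtype
  let net : Set (X → Y) := range fun u : K → t =>
    Function.extend Subtype.val (fun x => (u x : Y)) fun _ => Classical.arbitrary Y
  obtain ⟨Δ, w, δ, hKΔ, hδ, hcap⟩ :=
    exists_captures_of_finite hD hd K (half_pos hε) (finite_range _ : net.Finite)
  refine ⟨Δ, w, δ, hKΔ, hδ, fun v hv => ?_⟩
  have hnear : ∀ x : K, ∃ y : t, dist (v x) y < ε / 2 := fun x => by
    simpa using hCt (hv x x.2)
  choose u hu using hnear
  obtain ⟨v', hv', hsub⟩ := hcap _ ⟨u, rfl⟩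
  refine ⟨v', fun x hx => ?_, hsub⟩
  have hv'u : dist (v' x) (u ⟨x, hx⟩) < ε / 2 := by
    simpa [Subtype.val_injective.extend_apply _ _ (⟨x, hx⟩ : K)] using hv' x hx
  calc dist (v' x) (v x) ≤ dist (v' x) (u ⟨x, hx⟩) + dist (v x) (u ⟨x, hx⟩) :=
        dist_triangle_right _ _ _
    _ < ε / 2 + ε / 2 := add_lt_add hv'u (hu ⟨x, hx⟩)
    _ = ε := add_halves ε

end Box

section Interpolation

variable {X : Type*} [TopologicalSpace X]

lemma exists_continuous_eqOn_finset {R : Type*} [Field R] [TopologicalSpace R]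
    [IsTopologicalRing R] (hX : SeparatesPoints {f : X → R | Continuous f}) (K : Finset X)
    (v : X → R) : ∃ p : X → R, Continuous p ∧ EqOn p v K := by
  classical
  induction K using Finset.induction_on with
  | empty => exact ⟨0, continuous_const, by simp⟩
  | insert a K ha ih =>
    obtain ⟨p, hp, hpv⟩ := ih
    have hsep : ∀ y ∈ K, ∃ f : X → R, Continuous f ∧ f a ≠ f y := fun y hy =>
      hX (ne_of_mem_of_not_mem hy ha).symm
    choose! f hf hfa using hsep
    let q : X → R := fun z => ∏ y ∈ K, (f y z - f y y)
    have hq : Continuous q :=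
      continuous_finsetProd K fun y hy => (hf y hy).sub continuous_const
    have hqa : q a ≠ 0 := Finset.prod_ne_zero_iff.2 fun y hy => sub_ne_zero.2 (hfa y hy)
    have hqK : ∀ y ∈ K, q y = 0 := fun y hy => Finset.prod_eq_zero hy (sub_self _)
    refine ⟨fun z => p z + (v a - p a) / q a * q z, by fun_prop, fun x hx => ?_⟩
    rcases Finset.mem_insert.1 (Finset.mem_coe.1 hx) with rfl | hxK
    · simp [div_mul_cancel₀ _ hqa]
    · simp [hqK x hxK, hpv hxK]

variable (hX : SeparatesPoints {f : X → ℝ | Continuous f})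
include hX

lemma exists_continuous_eqOn_finset_abs_le (K : Finset X) {v : X → ℝ} {c : ℝ} (hc : 0 ≤ c)
    (hv : ∀ x ∈ K, |v x| ≤ c) :
    ∃ p : X → ℝ, Continuous p ∧ EqOn p v K ∧ ∀ x, |p x| ≤ c := by
  obtain ⟨p, hp, hpv⟩ := exists_continuous_eqOn_finset hX K v
  refine ⟨fun x => max (-c) (min c (p x)), by fun_prop, fun x hx => ?_, fun x => ?_⟩
  · obtain ⟨hlower, hupper⟩ := abs_le.1 (hv x hx)
    simp only [hpv hx, min_eq_right hupper, max_eq_right hlower]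
  · exact abs_le.2 ⟨le_max_left _ _, max_le (by linarith) (min_le_left _ _)⟩

end Interpolation

lemma separatesPoints_continuous_sigma {A Y : Type*} {X : A → Type*} [∀ b, TopologicalSpace (X b)]
    [TopologicalSpace Y] [Nontrivial Y]
    (hX : ∀ b, SeparatesPoints {f : X b → Y | Continuous f}) :
    SeparatesPoints {f : (Σ b, X b) → Y | Continuous f} := by
  classical
  obtain ⟨y₀, y₁, hy⟩ := exists_pair_ne Y
  have extend_continuous (b : A) {p : X b → Y} (hp : Continuous p) :
      Continuous fun z : Σ b, X b => Function.update (fun b (_ : X b) => y₀) b p z.1 z.2 := by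
    refine continuous_sigma fun b' => ?_
    rcases eq_or_ne b' b with rfl | hb
    · simpa using hp
    · simpa [hb] using! continuous_const
  rintro ⟨b, x⟩ ⟨b', x'⟩ hne
  by_cases hb : b' = b
  · subst hb
    obtain ⟨p, hp, hpx⟩ := hX b' (fun h => hne (by rw [h]) : x ≠ x')
    exact ⟨_, extend_continuous b' hp, by simpa using hpx⟩
  · exact ⟨_, extend_continuous b (p := fun _ => y₁) continuous_const, by simpa [hb] using hy.symm⟩

section SubstClosed

/-- A family `F` of functions `X → Y` is closed under substitution if it contains the continuous
functions and, with `f`, every function `x ↦ H (f x, x)` for a continuous `H`. The Baire classes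
enter the argument only through this property. -/
structure IsSubstClosed {X Y : Type*} [TopologicalSpace X] [TopologicalSpace Y]
    (F : Set (X → Y)) : Prop where
  continuous_mem : ∀ {p : X → Y}, Continuous p → p ∈ F
  subst_mem : ∀ {f : X → Y}, f ∈ F → ∀ {H : Y × X → Y}, Continuous H → (fun x => H (f x, x)) ∈ F

variable {X Y : Type*} [TopologicalSpace X] [TopologicalSpace Y]

lemma isSubstClosed_baireClass (α : Ordinal.{0}) : IsSubstClosed (BaireClass X Y α) where
  continuous_mem {p} hp := by
    rw [BaireClass]
    split_ifs
    · exact hp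
    · exact ⟨fun _ => p, fun _ => Or.inl hp, fun _ => tendsto_const_nhds⟩
  subst_mem {f} hf {H} hH := by
    induction α using WellFoundedLT.induction generalizing f with
    | ind α ih =>
      rw [BaireClass] at hf ⊢
      split_ifs at hf ⊢ with hα
      · exact hH.comp (Continuous.prodMk hf continuous_id)
      · obtain ⟨g, hg, hgf⟩ := hf
        refine ⟨fun n x => H (g n x, x), fun n => ?_, fun x =>
          (hH.tendsto (f x, x)).comp ((hgf x).prodMk_nhds tendsto_const_nhds)⟩
        rcases hg n with hgn | ⟨β, hβ, hgn⟩
        · exact Or.inl (hH.comp (hgn.prodMk continuous_id))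
        · exact Or.inr ⟨β, hβ, ih β hβ hgn⟩

lemma isSubstClosed_baireFun (α : Ordinal.{0}) : IsSubstClosed (BaireFun X Y α) := by
  unfold BaireFun
  split_ifs
  · constructor
    · intro p hp
      exact mem_biUnion (omega_pos 1) ((isSubstClosed_baireClass 0).continuous_mem hp)
    · intro f hf H hH
      obtain ⟨β, hβ, hfβ⟩ := mem_iUnion₂.1 hf
      exact mem_biUnion hβ ((isSubstClosed_baireClass β).subst_mem hfβ hH)
  · exact isSubstClosed_baireClass α

lemma IsSubstClosed.dense (hX : SeparatesPoints {f : X → ℝ | Continuous f}) {F : Set (X → ℝ)}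
    (hF : IsSubstClosed F) : Dense F := by
  refine dense_iff_forall_box_inter_nonempty.2 fun K v δ hδ => ?_
  obtain ⟨p, hp, hpv⟩ := exists_continuous_eqOn_finset hX K v
  exact ⟨p, fun x hx => by simpa [hpv hx] using hδ, hF.continuous_mem hp⟩

end SubstClosed

section Unbounded

lemma eventually_disjoint_of_pairwise_disjoint {X : Type*} {Δ : ℕ → Finset X}
    (hΔ : Pairwise (Function.onFun Disjoint Δ)) (K : Finset X) :
    ∀ᶠ n in atTop, Disjoint K (Δ n) := by
  have hmem (x : X) : {n | x ∈ Δ n}.Subsingleton := fun m hm n hn =>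
    hΔ.eq (Finset.not_disjoint_iff.2 ⟨x, hm, hn⟩)
  have hfinite : (⋃ x ∈ K, {n | x ∈ Δ n}).Finite :=
    K.finite_toSet.biUnion fun x _ => (hmem x).finite
  rw [← Nat.cofinite_eq_atTop]
  filter_upwards [hfinite.compl_mem_cofinite] with n hn
  simpa [Finset.disjoint_left] using hn

/-- Along every sequence of pairwise disjoint finite sets some member of `F` is unbounded: it is
uniformly large on infinitely many of them. -/
def UnboundedAlongDisjointFinsets {X : Type*} (F : Set (X → ℝ)) : Prop :=
  ∀ Δ : ℕ → Finset X, Pairwise (Function.onFun Disjoint Δ) →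
    ∃ h ∈ F, ∀ m : ℕ, ∃ᶠ n in atTop, ∀ x ∈ Δ n, (m : ℝ) ≤ h x

variable {X : Type*} {F : Set (X → ℝ)}

lemma isOpen_setOf_exists_ge_forall_lt (Δ : ℕ → Finset X) (m : ℝ) (N : ℕ) :
    IsOpen {f : X → ℝ | ∃ n ≥ N, ∀ x ∈ Δ n, m < f x} := by
  simp only [ge_iff_le, ← exists_prop, ofPred_exists, ofPred_forall]
  exact isOpen_iUnion fun n => isOpen_iUnion fun _ =>
    isOpen_biInter_finset fun x _ => isOpen_lt continuous_const (continuous_apply x)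

lemma dense_setOf_exists_ge_forall_lt {Δ : ℕ → Finset X}
    (hΔ : Pairwise (Function.onFun Disjoint Δ)) (m : ℝ) (N : ℕ) :
    Dense {f : X → ℝ | ∃ n ≥ N, ∀ x ∈ Δ n, m < f x} := by
  classical
  refine dense_iff_forall_box_inter_nonempty.2 fun K v δ hδ => ?_
  obtain ⟨n, hKn, hn⟩ :=
    ((eventually_disjoint_of_pairwise_disjoint hΔ K).and (eventually_ge_atTop N)).exists
  refine ⟨K.piecewise v fun _ => m + 1, fun x hx => ?_, n, hn, fun x hx => ?_⟩
  · simpa [Finset.mem_coe.1 hx] using hδ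
  · simp [Finset.disjoint_right.1 hKn hx]

lemma dense_preimage_val_of_dense_inter {Y : Type*} [TopologicalSpace Y] {S W : Set Y}
    (h : Dense (S ∩ W)) : Dense ((Subtype.val : S → Y) ⁻¹' W) := by
  rw [Subtype.dense_iff, Subtype.image_preimage_coe, h.closure_eq]
  exact subset_univ S

lemma unboundedAlongDisjointFinsets_of_baireSpace (hF : Dense F) [BaireSpace F] :
    UnboundedAlongDisjointFinsets F := by
  intro Δ hΔ
  let W : ℕ × ℕ → Set (X → ℝ) := fun mN => {f | ∃ n ≥ mN.2, ∀ x ∈ Δ n, (mN.1 : ℝ) < f x}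
  have hWo (mN) : IsOpen (W mN) := isOpen_setOf_exists_ge_forall_lt Δ _ _
  have hdense : Dense (⋂ mN, (Subtype.val : F → X → ℝ) ⁻¹' W mN) := by
    refine dense_iInter_of_isOpen (fun mN => (hWo mN).preimage continuous_subtype_val)
      fun mN => dense_preimage_val_of_dense_inter ?_
    exact hF.inter_of_isOpen_right (dense_setOf_exists_ge_forall_lt hΔ _ _) (hWo mN)
  have := hF.nonempty.to_subtype
  obtain ⟨f, hf⟩ := hdense.nonempty
  refine ⟨f, f.2, fun m => frequently_atTop.2 fun N => ?_⟩
  obtain ⟨n, hn, hlt⟩ := mem_iInter.1 hf (m, N)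
  exact ⟨n, hn, fun x hx => (hlt x hx).le⟩

lemma UnboundedAlongDisjointFinsets.exists_infinite_subset (hF : UnboundedAlongDisjointFinsets F)
    {Δ : ℕ → Finset X} (hΔ : Pairwise (Function.onFun Disjoint Δ)) {S : Set ℕ} (hS : S.Infinite) :
    ∃ T ⊆ S, T.Infinite ∧
      ∃ h ∈ F, ∀ m : ℕ, ∀ᶠ n in atTop, n ∈ T → ∀ x ∈ Δ n, (m : ℝ) ≤ h x := by
  have henum : StrictMono (Nat.nth (· ∈ S)) := Nat.nth_strictMono hS
  obtain ⟨h, hhF, hh⟩ := hF (Δ ∘ Nat.nth (· ∈ S)) (hΔ.comp_of_injective henum.injective)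
  obtain ⟨φ, hφ, hle⟩ := extraction_forall_of_frequently hh
  have hψ : StrictMono (Nat.nth (· ∈ S) ∘ φ) := henum.comp hφ
  refine ⟨range (Nat.nth (· ∈ S) ∘ φ), ?_, infinite_range_of_injective hψ.injective, h, hhF,
    fun m => ?_⟩
  · rintro _ ⟨k, rfl⟩
    exact Nat.nth_mem_of_infinite hS _
  · filter_upwards [eventually_ge_atTop ((Nat.nth (· ∈ S) ∘ φ) m)]
    rintro _ hn ⟨k, rfl⟩ x hx
    exact (Nat.cast_le.2 (hψ.le_iff_le.1 hn)).trans (hle k x hx)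

lemma exists_antitone_infinite_of_refine {Q : ℕ → Set ℕ → Prop}
    (hQ : ∀ i (S : Set ℕ), S.Infinite → ∃ T ⊆ S, T.Infinite ∧ Q i T) :
    ∃ S : ℕ → Set ℕ, Antitone S ∧ ∀ i, (S i).Infinite ∧ Q i (S i) := by
  choose! T hTS hT hQT using hQ
  let S : ℕ → Set ℕ := fun n => Nat.rec univ T n
  have hS (i : ℕ) : (S i).Infinite := by
    induction i with
    | zero => exact infinite_univ
    | succ i ih => exact hT i _ ih
  exact ⟨fun i => S (i + 1), antitone_nat_of_succ_le fun i => hTS (i + 1) _ (hS (i + 1)),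
    fun i => ⟨hS (i + 1), hQT i _ (hS i)⟩⟩

lemma exists_strictMono_forall_le_of_sequence {X : ℕ → Type*} [∀ i, TopologicalSpace (X i)]
    {F : ∀ i, Set (X i → ℝ)} (hF : ∀ i, IsSubstClosed (F i))
    (hU : ∀ i, UnboundedAlongDisjointFinsets (F i)) {Δ : ∀ i, ℕ → Finset (X i)}
    (hΔ : ∀ i, Pairwise (Function.onFun Disjoint (Δ i))) :
    ∃ φ : ℕ → ℕ, StrictMono φ ∧ ∀ i, ∃ f ∈ F i, ∀ k, ∀ x ∈ Δ i (φ k), (k : ℝ) ≤ f x := by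
  obtain ⟨S, hanti, hS⟩ := exists_antitone_infinite_of_refine
    fun i _ hS => (hU i).exists_infinite_subset (hΔ i) hS
  choose hinf h hhF hh using hS
  have hfreq (k : ℕ) : ∃ᶠ n in atTop, ∀ i ≤ k, ∀ x ∈ Δ i n, (k : ℝ) ≤ h i x := by
    have hlarge : ∀ᶠ n in atTop, ∀ i ≤ k, n ∈ S i → ∀ x ∈ Δ i n, (k : ℝ) ≤ h i x :=
      (eventually_all_finite (finite_Iic k)).2 fun i _ => hh i k
    exact ((Nat.frequently_atTop_iff_infinite.2 (hinf k)).and_eventually hlarge).mono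
      fun n ⟨hn, hle⟩ i hik => hle i hik (hanti hik hn)
  obtain ⟨φ, hφ, hle⟩ := extraction_forall_of_frequently hfreq
  refine ⟨φ, hφ, fun i => ⟨fun x => max (h i x) i, ?_, fun k x hx => ?_⟩⟩
  · exact (hF i).subst_mem (hhF i) (H := fun z => max z.1 i) (by fun_prop)
  · rcases le_total i k with hik | hki
    · exact le_max_of_le_left (hle k i hik x hx)
    · exact le_max_of_le_right (Nat.cast_le.2 hki)

end Unbounded

section Sigma

variable {A Y : Type*} {X : A → Type*}

/-- The functions on the disjoint sum `Σ b, X b` whose restriction to each summand `X b` lies in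
`F b`; this realises the product `∏ b, F b` as a single family of functions. -/
def sigmaFamily (F : ∀ b, Set (X b → Y)) : Set ((Σ b, X b) → Y) :=
  {f | ∀ b, (fun x => f ⟨b, x⟩) ∈ F b}

/-- The restrictions to the summands identify `sigmaFamily F` with the product of the `F b`. -/
def sigmaFamilyHomeomorph [TopologicalSpace Y] (F : ∀ b, Set (X b → Y)) :
    sigmaFamily F ≃ₜ ∀ b, F b where
  toFun f b := ⟨fun x => f.1 ⟨b, x⟩, f.2 b⟩
  invFun u := ⟨fun z => (u z.1).1 z.2, fun b => (u b).2⟩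
  left_inv _ := rfl
  right_inv _ := rfl
  continuous_toFun := continuous_pi fun b => continuous_induced_rng.2 <|
    continuous_pi fun x => (continuous_apply (⟨b, x⟩ : Σ b, X b)).comp continuous_subtype_val
  continuous_invFun := continuous_induced_rng.2 <| continuous_pi fun z =>
    (continuous_apply z.2).comp (continuous_subtype_val.comp (continuous_apply z.1))

variable [∀ b, TopologicalSpace (X b)]

lemma IsSubstClosed.sigmaFamily [TopologicalSpace Y] {F : ∀ b, Set (X b → Y)}
    (hF : ∀ b, IsSubstClosed (F b)) : IsSubstClosed (sigmaFamily F) where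
  continuous_mem hp b := (hF b).continuous_mem (hp.comp continuous_sigmaMk)
  subst_mem {_} hf {H} hH b := (hF b).subst_mem (hf b) (H := fun z => H (z.1, ⟨b, z.2⟩))
    (hH.comp (continuous_fst.prodMk (continuous_sigmaMk.comp continuous_snd)))

/-- Only countably many summands meet the given finite sets, so a diagonal sequence serves them
all. -/
lemma UnboundedAlongDisjointFinsets.sigmaFamily {F : ∀ b, Set (X b → ℝ)}
    (hF : ∀ b, IsSubstClosed (F b)) (hU : ∀ b, UnboundedAlongDisjointFinsets (F b)) :
    UnboundedAlongDisjointFinsets (sigmaFamily F) := by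
  intro Δ hΔ
  rcases isEmpty_or_nonempty A with hA | hA
  · exact ⟨0, isEmptyElim, fun _ => .of_forall fun _ => isEmptyElim⟩
  let slice (b : A) (n : ℕ) : Finset (X b) := (Δ n).preimage (Sigma.mk b) sigma_mk_injective.injOn
  have hslice (b : A) : Pairwise (Function.onFun Disjoint (slice b)) := fun i j hij => by
    have hdisj := hΔ hij
    simp only [Function.onFun, Finset.disjoint_left, slice, Finset.mem_preimage] at hdisj ⊢
    exact fun x hx => hdisj hx
  have hcount : (⋃ n, Sigma.fst '' (Δ n : Set (Σ b, X b))).Countable :=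
    countable_iUnion fun n => ((Δ n).finite_toSet.image _).countable
  obtain ⟨e, he⟩ := countable_iff_exists_subset_range.1 hcount
  obtain ⟨φ, hφ, hlarge⟩ := exists_strictMono_forall_le_of_sequence (fun i => hF (e i))
    (fun i => hU (e i)) fun i => hslice (e i)
  have hsummand (b : A) : ∃ f ∈ F b, ∀ k, ∀ x ∈ slice b (φ k), (k : ℝ) ≤ f x := by
    by_cases hb : b ∈ range e
    · obtain ⟨i, rfl⟩ := hb
      exact hlarge i
    · refine ⟨0, (hF b).continuous_mem continuous_const, fun k x hx => ?_⟩
      exact (hb (he (mem_iUnion.2 ⟨φ k, ⟨b, x⟩, by simpa [slice] using hx, rfl⟩))).elim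
  choose f hfF hf using hsummand
  refine ⟨fun z => f z.1 z.2, hfF, fun m => ?_⟩
  refine hφ.tendsto_atTop.frequently (Eventually.frequently ?_)
  filter_upwards [eventually_ge_atTop m] with k hk
  exact fun ⟨b, x⟩ hx => (Nat.cast_le.2 hk).trans (hf b k x (by simpa [slice] using hx))

end Sigma

/-- The data of a successive approximation producing a member of `⋂ n, D n`. At step `n` a function
bounded by `M n` is moved by at most `ε n` on the old coordinates `K n` and made close to `w n` on
the new coordinates `Δ n`; afterwards every function `δ n`-close to it on `K (n + 1)` lies in
`D n`. The numerical conditions are inequalities, so that they survive passing to subsequences. -/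
structure ApproxScheme {X : Type*} (D : ℕ → Set (X → ℝ)) where
  K : ℕ → Finset X
  Δ : ℕ → Finset X
  w : ℕ → X → ℝ
  M : ℕ → ℝ
  ε : ℕ → ℝ
  δ : ℕ → ℝ
  M_nonneg : ∀ n, 0 ≤ M n
  ε_pos : ∀ n, 0 < ε n
  ε_le_one : ∀ n, ε n ≤ 1
  δ_pos : ∀ n, 0 < δ n
  disjoint_K_Δ : ∀ n, Disjoint (K n) (Δ n)
  K_subset_succ : ∀ n, K n ⊆ K (n + 1)
  Δ_subset_succ : ∀ n, Δ n ⊆ K (n + 1)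
  M_succ_ge : ∀ n, 2 * M n + 2 + ∑ x ∈ Δ n, |w n x| ≤ M (n + 1)
  ε_succ_le_half : ∀ n, ε (n + 1) ≤ ε n / 2
  ε_succ_le_δ : ∀ n, ε (n + 1) ≤ δ n / 4
  captures : ∀ n, Captures (D n) (K n) (Δ n) (w n)
    ((K n : Set X).pi fun _ => Icc (-M n) (M n)) (ε n) (δ n)

namespace ApproxScheme

variable {X : Type*} {D : ℕ → Set (X → ℝ)}

lemma exists_init (hDo : ∀ n, IsOpen (D n)) (hDd : ∀ n, Dense (D n)) (K₀ : Finset X) {M₀ η : ℝ}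
    (hM₀ : 0 ≤ M₀) (hη : 0 < η) (hη_le : η ≤ 1) :
    ∃ s : ApproxScheme D, s.K 0 = K₀ ∧ s.M 0 = M₀ ∧ s.ε 0 = η := by
  classical
  have hstep (n : ℕ) (K : Finset X) (M ε : ℝ) (hε : 0 < ε) :
      ∃ (Δ : Finset X) (w : X → ℝ) (δ : ℝ), Disjoint K Δ ∧ 0 < δ ∧
        Captures (D n) K Δ w ((K : Set X).pi fun _ => Icc (-M) M) ε δ :=
    exists_captures_of_totallyBounded (hDo n) (hDd n) K hε (isCompact_Icc.totallyBounded)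
  choose! Δ w δ hdisj hδ hcap using hstep
  let state : ℕ → Finset X × ℝ × ℝ := fun n => Nat.rec (K₀, M₀, η) (fun n (K, M, ε) =>
    (K ∪ Δ n K M ε, 2 * M + 2 + ∑ x ∈ Δ n K M ε, |w n K M ε x|, min (ε / 2) (δ n K M ε / 4))) n
  have hM (n : ℕ) : 0 ≤ (state n).2.1 := by
    induction n with
    | zero => exact hM₀
    | succ n ih => dsimp only [state] at ih ⊢; positivity
  have hε (n : ℕ) : 0 < (state n).2.2 := by
    induction n with
    | zero => exact hη
    | succ n ih => exact lt_min (half_pos ih) (div_pos (hδ n _ _ _ ih) four_pos)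
  have hε_le (n : ℕ) : (state n).2.2 ≤ 1 := by
    induction n with
    | zero => exact hη_le
    | succ n ih => exact (min_le_left _ _).trans ((half_le_self (hε n).le).trans ih)
  exact ⟨{
    K n := (state n).1
    Δ n := Δ n (state n).1 (state n).2.1 (state n).2.2
    w n := w n (state n).1 (state n).2.1 (state n).2.2
    M n := (state n).2.1
    ε n := (state n).2.2
    δ n := δ n (state n).1 (state n).2.1 (state n).2.2
    M_nonneg := hM
    ε_pos := hε
    ε_le_one := hε_le
    δ_pos n := hδ n _ _ _ (hε n)
    disjoint_K_Δ n := hdisj n _ _ _ (hε n)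
    K_subset_succ n := Finset.subset_union_left
    Δ_subset_succ n := Finset.subset_union_right
    M_succ_ge n := le_rfl
    ε_succ_le_half n := min_le_left _ _
    ε_succ_le_δ n := min_le_right _ _
    captures n := hcap n _ _ _ (hε n) }, rfl, rfl, rfl⟩

variable (s : ApproxScheme D)

lemma monotone_K : Monotone s.K :=
  monotone_nat_of_le_succ s.K_subset_succ

lemma M_add_one_le (n : ℕ) : s.M n + 1 ≤ s.M (n + 1) := by
  have : 0 ≤ ∑ x ∈ s.Δ n, |s.w n x| := by positivity
  linarith [s.M_nonneg n, s.M_succ_ge n]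

lemma monotone_M : Monotone s.M :=
  monotone_nat_of_le_succ fun n => by linarith [s.M_add_one_le n]

lemma antitone_ε : Antitone s.ε :=
  antitone_nat_of_succ_le fun n => (s.ε_succ_le_half n).trans (half_le_self (s.ε_pos n).le)

lemma pairwise_disjoint_Δ : Pairwise (Function.onFun Disjoint s.Δ) := by
  refine (pairwise_disjoint_on s.Δ).2 fun m n hmn => ?_
  exact (s.disjoint_K_Δ n).mono_left ((s.Δ_subset_succ m).trans (s.monotone_K hmn))

lemma ε_add_le (k i : ℕ) : s.ε (i + k) ≤ 2 * s.ε k / 2 / 2 ^ i := by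
  induction i with
  | zero => simp
  | succ i ih =>
    calc s.ε (i + 1 + k) ≤ s.ε (i + k) / 2 := by
          rw [Nat.add_right_comm]; exact s.ε_succ_le_half _
      _ ≤ 2 * s.ε k / 2 / 2 ^ i / 2 := by gcongr
      _ = 2 * s.ε k / 2 / 2 ^ (i + 1) := by rw [pow_succ, div_div _ (2 ^ i)]

lemma abs_w_sub_sub_le {n : ℕ} {x : X} (hx : x ∈ s.Δ n) {a b : ℝ} (ha : |a| ≤ s.M n)
    (hb : |b| ≤ s.ε n) : |s.w n x - a - b| ≤ s.M (n + 1) - s.M n - 1 := by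
  have hw : |s.w n x| ≤ ∑ x ∈ s.Δ n, |s.w n x| :=
    Finset.single_le_sum (f := fun x => |s.w n x|) (fun _ _ => abs_nonneg _) hx
  linarith [abs_sub (s.w n x - a) b, abs_sub (s.w n x) a, s.ε_le_one n, s.M_succ_ge n]

lemma summable_ε : Summable s.ε :=
  .of_nonneg_of_le (fun n => (s.ε_pos n).le) (s.ε_add_le 0)
    (hasSum_geometric_two' (2 * s.ε 0)).summable

/-- The approximation scheme obtained by performing only the steps `φ 0 < φ 1 < ⋯`. -/
def subseq {φ : ℕ → ℕ} (hφ : StrictMono φ) : ApproxScheme (D ∘ φ) where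
  K := s.K ∘ φ
  Δ := s.Δ ∘ φ
  w := s.w ∘ φ
  M := s.M ∘ φ
  ε := s.ε ∘ φ
  δ := s.δ ∘ φ
  M_nonneg n := s.M_nonneg (φ n)
  ε_pos n := s.ε_pos (φ n)
  ε_le_one n := s.ε_le_one (φ n)
  δ_pos n := s.δ_pos (φ n)
  disjoint_K_Δ n := s.disjoint_K_Δ (φ n)
  K_subset_succ n := s.monotone_K (hφ n.lt_succ_self).le
  Δ_subset_succ n := (s.Δ_subset_succ (φ n)).trans (s.monotone_K (hφ n.lt_succ_self))
  M_succ_ge n := (s.M_succ_ge (φ n)).trans (s.monotone_M (hφ n.lt_succ_self))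
  ε_succ_le_half n := (s.antitone_ε (hφ n.lt_succ_self)).trans (s.ε_succ_le_half (φ n))
  ε_succ_le_δ n := (s.antitone_ε (hφ n.lt_succ_self)).trans (s.ε_succ_le_δ (φ n))
  captures n := s.captures (φ n)

lemma abs_sum_range_sub_le {u : ℕ → X → ℝ} (hu : ∀ i, ∀ x ∈ s.K i, |u i x| ≤ s.ε i) {k : ℕ} {x : X}
    (hx : x ∈ s.K k) {a : ℝ} (ha : HasSum (fun i => u i x) a) :
    |a - ∑ i ∈ Finset.range k, u i x| ≤ 2 * s.ε k := by
  have htail : HasSum (fun i => u (i + k) x) (a - ∑ i ∈ Finset.range k, u i x) :=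
    (hasSum_nat_add_iff' k).2 ha
  rw [← htail.tsum_eq, ← Real.norm_eq_abs]
  exact tsum_of_norm_bounded (hasSum_geometric_two' (2 * s.ε k)) fun i =>
    (hu _ x (s.monotone_K (Nat.le_add_left k i) hx)).trans (s.ε_add_le k i)

variable [TopologicalSpace X] (hX : SeparatesPoints {f : X → ℝ | Continuous f})
include hX

/-- Here `g` moves `f` into position on the old coordinates and `p` on the new ones; only `p` may be
large, hence only `p` needs the switch `r`. -/
lemma exists_correction (n : ℕ) {f r : X → ℝ} (hf : ∀ x, |f x| ≤ s.M n) (hr : ∀ x, |r x| ≤ 1)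
    (hrΔ : ∀ x ∈ s.Δ n, r x = 1) :
    ∃ g p : X → ℝ, Continuous g ∧ Continuous p ∧ (∀ x, |g x| ≤ s.ε n) ∧ (∀ x ∈ s.K n, p x = 0) ∧
      (∀ x, |f x + (g x + r x * p x)| ≤ s.M (n + 1)) ∧
      box (s.K (n + 1)) (f + (g + r * p)) (s.δ n) ⊆ D n := by
  classical
  obtain ⟨v, hvf, hvD⟩ := s.captures n f fun x _ => abs_le.1 (hf x)
  obtain ⟨g, hg, hgv, hg_le⟩ := exists_continuous_eqOn_finset_abs_le hX (s.K n) (v := v - f)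
    (s.ε_pos n).le fun x hx => (hvf x hx).le
  have hc : 0 ≤ s.M (n + 1) - s.M n - 1 := by linarith [s.M_add_one_le n]
  obtain ⟨p, hp, hpw, hp_le⟩ := exists_continuous_eqOn_finset_abs_le hX (s.K n ∪ s.Δ n)
    (v := (s.K n).piecewise 0 (s.w n - f - g)) hc fun x hx => by
      by_cases hxK : x ∈ s.K n
      · simpa [hxK] using hc
      · have hxΔ : x ∈ s.Δ n := (Finset.mem_union.1 hx).resolve_left hxK
        simpa [hxK] using s.abs_w_sub_sub_le hxΔ (hf x) (hg_le x)
  have hpK : ∀ x ∈ s.K n, p x = 0 := fun x hx => by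
    rw [hpw (Finset.mem_coe.2 (Finset.mem_union_left _ hx)), Finset.piecewise_eq_of_mem _ _ _ hx]
    rfl
  refine ⟨g, p, hg, hp, hg_le, hpK, fun x => ?_, fun f' hf' => hvD ⟨fun x hx => ?_, fun x hx => ?_⟩⟩
  · have hrp : |r x * p x| ≤ |p x| := by
      rw [abs_mul]; exact mul_le_of_le_one_left (abs_nonneg _) (hr x)
    linarith [abs_add_le (f x) (g x + r x * p x), abs_add_le (g x) (r x * p x), hf x, hg_le x,
      hp_le x, s.ε_le_one n]
  · simpa [hpK x hx, hgv hx] using hf' x (s.K_subset_succ n hx)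
  · have hpx : p x = s.w n x - f x - g x := by
      rw [hpw (Finset.mem_coe.2 (Finset.mem_union_right _ hx)), Finset.piecewise_eq_of_notMem _ _ _
        (Finset.disjoint_right.1 (s.disjoint_K_Δ n) hx)]
      rfl
    simpa [hrΔ x hx, hpx] using hf' x (s.Δ_subset_succ n hx)

lemma exists_corrections {f₀ : X → ℝ} (hf₀ : ∀ x, |f₀ x| ≤ s.M 0) {r : ℕ → X → ℝ}
    (hr : ∀ n x, |r n x| ≤ 1) (hrΔ : ∀ n, ∀ x ∈ s.Δ n, r n x = 1) :
    ∃ g p : ℕ → X → ℝ, (∀ n, Continuous (g n)) ∧ (∀ n, Continuous (p n)) ∧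
      (∀ n x, |g n x| ≤ s.ε n) ∧ (∀ n, ∀ x ∈ s.K n, p n x = 0) ∧
      ∀ n, box (s.K (n + 1)) (f₀ + ∑ i ∈ Finset.range (n + 1), (g i + r i * p i)) (s.δ n)
        ⊆ D n := by
  have hstep (n : ℕ) (f : X → ℝ) (hf : ∀ x, |f x| ≤ s.M n) :=
    s.exists_correction hX n hf (hr n) (hrΔ n)
  choose! g p hg hp hg_le hpK hM hD using hstep
  let approx : ℕ → X → ℝ := fun n => Nat.rec f₀ (fun n f => f + (g n f + r n * p n f)) n
  have happrox (n : ℕ) : ∀ x, |approx n x| ≤ s.M n := by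
    induction n with
    | zero => exact hf₀
    | succ n ih => exact hM n _ ih
  have hsum (n : ℕ) : f₀ + ∑ i ∈ Finset.range n, (g i (approx i) + r i * p i (approx i))
      = approx n := by
    induction n with
    | zero => simp [approx]
    | succ n ih => rw [Finset.sum_range_succ, ← add_assoc, ih]
  refine ⟨fun n => g n (approx n), fun n => p n (approx n), fun n => hg n _ (happrox n),
    fun n => hp n _ (happrox n), fun n => hg_le n _ (happrox n), fun n => hpK n _ (happrox n),
    fun n => ?_⟩
  rw [hsum]
  exact hD n _ (happrox n)

end ApproxScheme

section Cutoff

/-- A continuous switch which is off for `t ≤ k - 1` and fully on for `k ≤ t`. -/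
noncomputable def cutoff (k : ℕ) (t : ℝ) : ℝ := Real.smoothTransition (t + 1 - k)

lemma continuous_cutoff (k : ℕ) : Continuous (cutoff k) :=
  Real.smoothTransition.continuous.comp (by fun_prop)

lemma abs_cutoff_le_one (k : ℕ) (t : ℝ) : |cutoff k t| ≤ 1 :=
  (abs_of_nonneg (Real.smoothTransition.nonneg _)).trans_le (Real.smoothTransition.le_one _)

lemma cutoff_of_le {k : ℕ} {t : ℝ} (h : k ≤ t) : cutoff k t = 1 :=
  Real.smoothTransition.one_of_one_le (by linarith)

lemma cutoff_of_add_one_le {k : ℕ} {t : ℝ} (h : t + 1 ≤ k) : cutoff k t = 0 :=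
  Real.smoothTransition.zero_of_nonpos (by linarith)

variable {X : Type*} [TopologicalSpace X]

lemma locallyFinite_support_cutoff_mul (p : ℕ → X → ℝ) :
    LocallyFinite fun k => Function.support fun z : ℝ × X => cutoff k z.1 * p k z.2 := by
  rintro ⟨t, x⟩
  refine ⟨Iio (t + 1) ×ˢ Set.univ, prod_mem_nhds (Iio_mem_nhds (lt_add_one t)) univ_mem, ?_⟩
  obtain ⟨N, hN⟩ := exists_nat_ge (t + 2)
  refine (finite_Iio N).subset ?_
  rintro k ⟨⟨t', x'⟩, hne, ht', -⟩
  by_contra hk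
  have hNk : (N : ℝ) ≤ k := Nat.cast_le.2 (not_lt.1 hk)
  have ht'k : t' + 1 ≤ k := by linarith [mem_Iio.1 ht']
  simp [cutoff_of_add_one_le ht'k] at hne

lemma summable_cutoff_mul (p : ℕ → X → ℝ) (z : ℝ × X) :
    Summable fun k => cutoff k z.1 * p k z.2 :=
  summable_of_hasFiniteSupport ((locallyFinite_support_cutoff_mul p).point_finite z)

lemma continuous_tsum_cutoff_mul {p : ℕ → X → ℝ} (hp : ∀ k, Continuous (p k)) :
    Continuous fun z : ℝ × X => ∑' k, cutoff k z.1 * p k z.2 := by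
  have hlf := locallyFinite_support_cutoff_mul p
  refine (continuous_finsum (fun k => ?_) hlf).congr fun z =>
    (tsum_eq_finsum (hlf.point_finite z)).symm
  exact ((continuous_cutoff k).comp continuous_fst).mul ((hp k).comp continuous_snd)

end Cutoff

section Baire

variable {X : Type*} [TopologicalSpace X] {F : Set (X → ℝ)}

/-- The corrections of the scheme are switched on by `h`; the limit is a continuous function of
`(h x, x)`, hence in `F`. -/
lemma ApproxScheme.exists_mem_forall_mem (hX : SeparatesPoints {f : X → ℝ | Continuous f})
    (hF : IsSubstClosed F) {D : ℕ → Set (X → ℝ)} (s : ApproxScheme D) {h : X → ℝ} (hhF : h ∈ F)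
    (hh : ∀ k, ∀ x ∈ s.Δ k, (k : ℝ) ≤ h x) {f₀ : X → ℝ} (hf₀ : Continuous f₀)
    (hf₀M : ∀ x, |f₀ x| ≤ s.M 0) :
    ∃ f ∈ F, (∀ x ∈ s.K 0, |f x - f₀ x| ≤ 2 * s.ε 0) ∧ ∀ k, f ∈ D k := by
  obtain ⟨g, p, hg, hp, hg_le, hpK, hD⟩ := s.exists_corrections hX hf₀M
    (fun k x => abs_cutoff_le_one k (h x)) fun k x hx => cutoff_of_le (hh k x hx)
  let H : ℝ × X → ℝ := fun z => f₀ z.2 + (∑' k, g k z.2 + ∑' k, cutoff k z.1 * p k z.2)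
  have hH : Continuous H :=
    (hf₀.comp continuous_snd).add <|
      ((continuous_tsum hg s.summable_ε hg_le).comp continuous_snd).add
        (continuous_tsum_cutoff_mul hp)
  let u : ℕ → X → ℝ := fun k x => g k x + cutoff k (h x) * p k x
  have hu : ∀ k, ∀ x ∈ s.K k, |u k x| ≤ s.ε k := fun k x hx => by
    simpa [u, hpK k x hx] using hg_le k x
  have hsum (x : X) : HasSum (fun k => u k x) (H (h x, x) - f₀ x) := by
    rw [show H (h x, x) - f₀ x = _ from add_sub_cancel_left _ _]
    exact (s.summable_ε.of_norm_bounded fun k => hg_le k x).hasSum.add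
      (summable_cutoff_mul p (h x, x)).hasSum
  refine ⟨fun x => H (h x, x), hF.subst_mem hhF hH, fun x hx => ?_, fun k => hD k fun x hx => ?_⟩
  · simpa using s.abs_sum_range_sub_le hu hx (hsum x)
  · have htail := s.abs_sum_range_sub_le hu hx (hsum x)
    have hδ := s.δ_pos k
    have hεδ := s.ε_succ_le_δ k
    simp only [Metric.mem_ball, Real.dist_eq, Pi.add_apply, Finset.sum_apply, Pi.mul_apply]
    rw [sub_add_eq_sub_sub]
    exact htail.trans_lt (by linarith)

lemma isOpen_dense_dissipate {Y : Type*} [TopologicalSpace Y] {D : ℕ → Set Y}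
    (hDo : ∀ n, IsOpen (D n)) (hDd : ∀ n, Dense (D n)) (n : ℕ) :
    IsOpen (dissipate D n) ∧ Dense (dissipate D n) := by
  induction n with
  | zero => simpa only [dissipate_zero_nat] using ⟨hDo 0, hDd 0⟩
  | succ n ih =>
    rw [dissipate_succ]
    exact ⟨ih.1.inter (hDo _), ih.2.inter_of_isOpen_right (hDd _) (hDo _)⟩

lemma UnboundedAlongDisjointFinsets.dense_inter_iInter
    (hX : SeparatesPoints {f : X → ℝ | Continuous f}) (hF : IsSubstClosed F)
    (hU : UnboundedAlongDisjointFinsets F) {D : ℕ → Set (X → ℝ)} (hDo : ∀ n, IsOpen (D n))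
    (hDd : ∀ n, Dense (D n)) : Dense (F ∩ ⋂ n, D n) := by
  refine dense_iff_forall_box_inter_nonempty.2 fun K v η hη => ?_
  have hdiss := isOpen_dense_dissipate hDo hDd
  obtain ⟨s, hsK, hsM, hsε⟩ := ApproxScheme.exists_init (fun n => (hdiss n).1)
    (fun n => (hdiss n).2) K
    (M₀ := ∑ x ∈ K, |v x|) (η := min 1 (η / 4)) (by positivity) (by positivity) (min_le_left _ _)
  obtain ⟨h, hhF, hh⟩ := hU s.Δ s.pairwise_disjoint_Δ
  obtain ⟨φ, hφ, hle⟩ := extraction_forall_of_frequently hh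
  obtain ⟨f₀, hf₀, hf₀v, hf₀_le⟩ := exists_continuous_eqOn_finset_abs_le hX K (v := v)
    (s.M_nonneg 0) fun x hx => hsM ▸
      Finset.single_le_sum (f := fun x => |v x|) (fun _ _ => abs_nonneg _) hx
  obtain ⟨f, hfF, hff₀, hfD⟩ := (s.subseq hφ).exists_mem_forall_mem hX hF hhF hle hf₀
    fun x => (hf₀_le x).trans (s.monotone_M (Nat.zero_le _))
  refine ⟨f, fun x hx => ?_, hfF, mem_iInter.2 fun n => dissipate_subset hφ.le_apply (hfD n)⟩
  have hε : s.ε (φ 0) ≤ η / 4 :=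
    (s.antitone_ε (Nat.zero_le _)).trans (hsε.trans_le (min_le_right _ _))
  have hfx : |f x - f₀ x| ≤ 2 * s.ε (φ 0) :=
    hff₀ x (s.monotone_K (Nat.zero_le _) (hsK ▸ hx))
  rw [Metric.mem_ball, Real.dist_eq, ← hf₀v hx]
  linarith

lemma baireSpace_iff_unboundedAlongDisjointFinsets
    (hX : SeparatesPoints {f : X → ℝ | Continuous f}) (hF : IsSubstClosed F) :
    BaireSpace F ↔ UnboundedAlongDisjointFinsets F := by
  have hFd : Dense F := hF.dense hX
  refine ⟨fun _ => unboundedAlongDisjointFinsets_of_baireSpace hFd, fun hU => ⟨?_⟩⟩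
  intro U hUo hUd
  choose D hDo hDU using fun n => isOpen_induced_iff.1 (hUo n)
  obtain rfl : (fun n => Subtype.val ⁻¹' D n) = U := funext hDU
  have hDd (n : ℕ) : Dense (D n) :=
    (hFd.denseRange_val.dense_image continuous_subtype_val (hUd n)).mono
      (image_preimage_subset _ _)
  rw [← preimage_iInter]
  exact dense_preimage_val_of_dense_inter (hU.dense_inter_iInter hX hF hDo hDd)

end Baire

theorem statement4_general {A : Type*} {X : A → Type*} [∀ b, TopologicalSpace (X b)]
    (hX : ∀ b, SeparatesPoints {f : X b → ℝ | Continuous f}) {F : ∀ b, Set (X b → ℝ)}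
    (hF : ∀ b, IsSubstClosed (F b)) (h : ∀ b, BaireSpace (F b)) : BaireSpace (∀ b, F b) := by
  have hU (b : A) : UnboundedAlongDisjointFinsets (F b) :=
    (baireSpace_iff_unboundedAlongDisjointFinsets (hX b) (hF b)).1 (h b)
  have : BaireSpace (sigmaFamily F) :=
    (baireSpace_iff_unboundedAlongDisjointFinsets (separatesPoints_continuous_sigma hX)
      (IsSubstClosed.sigmaFamily hF)).2 (UnboundedAlongDisjointFinsets.sigmaFamily hF hU)
  exact (sigmaFamilyHomeomorph F).baireSpace

theorem statement4 {A : Type*} (X : A → Type*) [∀ b, TopologicalSpace (X b)]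
    [∀ b, T35Space (X b)] (α : Ordinal.{0}) (hα : α ≤ ω_ 1)
    (h : ∀ b : A, BaireSpace ↥(BaireFun (X b) ℝ α)) :
    BaireSpace (∀ b : A, ↥(BaireFun (X b) ℝ α)) :=
  statement4_general (fun _ => separatesPoints_continuous_of_t35Space)
    (fun _ => isSubstClosed_baireFun α) h
end

section
/- Let X be a topological space and 0 ≤ α ≤ ω₁. Then B_α(X, ℝ) is a Baire space if and only if B_α(X, Y) is a Baire space for every Banach space Y. -/
open Set Filter Topology Ordinal TopologicalSpace

/-!
Composition `(g, f) ↦ g ∘ f` is a continuous map `C(ℝ, Y) × B_α(X, ℝ) → B_α(X, Y)`, where `C(ℝ, Y)`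
carries the compact-open topology. It is skeletal: the image of a nonempty open set is dense in some
nonempty open set. Indeed, a basic neighbourhood of `f` constrains only the values on a finite set
`F ⊆ X`, and these can be perturbed to distinct reals `b x`. If `h` is such that `h x = g (b x)` on
`F`, then `h` agrees on any larger finite set with some `g' ∘ f'`: let `f'` send the new points to
distinct reals outside a large compact set and modify `g` only there. Hence the Baire property
passes from the product to `B_α(X, Y)`.

The product is Baire because `C(ℝ, Y)` is completely metrizable. In the classical proof one builds
countably many disjoint families of open boxes; here they are encoded as set-valued functions on the
Baire factor that are locally constant on a dense open set.
-/

section Shrinking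

variable {Z L : Type*} [PseudoMetricSpace Z]

/-- `B` is an admissible successor of `A` in a Cantor scheme for the section of `W` over `y`:
a closed subset of `A` with nonempty interior and diameter at most `ε` such that `B × {y} ⊆ W`.
Closed sets with nonempty interior are used instead of open sets so that Cantor's intersection
theorem applies directly. -/
structure IsShrinking (W : Set (Z × L)) (ε : ℝ) (y : L) (A B : Set Z) : Prop where
  isClosed : IsClosed B
  isBounded : Bornology.IsBounded B
  diam_le : Metric.diam B ≤ ε
  interior_nonempty : (interior B).Nonempty
  subset : B ⊆ A
  prod_mem : ∀ z ∈ B, (z, y) ∈ W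

theorem nonempty_iInter_of_isShrinking [CompleteSpace Z] {W : ℕ → Set (Z × L)} {y : L}
    {ε : ℕ → ℝ} (hε : Tendsto ε atTop (𝓝 0)) {A : ℕ → Set Z}
    (hA : ∀ n, IsShrinking (W n) (ε n) y (A n) (A (n + 1))) :
    (⋂ n, A (n + 1)).Nonempty := by
  refine Metric.nonempty_iInter_of_nonempty_biInter (fun n => (hA n).isClosed)
    (fun n => (hA n).isBounded) (fun N => ?_)
    (squeeze_zero (fun _ => Metric.diam_nonneg) (fun n => (hA n).diam_le) hε)
  have hanti : Antitone A := antitone_nat_of_succ_le fun n => (hA n).subset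
  exact ((hA N).interior_nonempty.mono interior_subset).mono
    (subset_iInter₂ fun n hn => hanti (Nat.succ_le_succ hn))

end Shrinking

section BaireProduct

variable {Z L β : Type*} [TopologicalSpace L]

/- Well-order the pairs `(V, b)` with `V` open and `R · b` valid on `V`, and let `B y` come from the
first pair whose open set contains `y`. On `V ∩ O`, where `V` is the first open set to meet `O`,
this choice is constant. -/
theorem exists_locallyConstant_selection {R : L → β → Prop}
    (hR : Dense {x | ∃ b, ∀ᶠ y in 𝓝 x, R y b}) :
    ∃ B : L → β, Dense {x | ∀ᶠ y in 𝓝 x, B y = B x ∧ R y (B y)} := by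
  rcases isEmpty_or_nonempty L with _ | _
  · exact ⟨isEmptyElim, fun x => isEmptyElim x⟩
  let P := {p : Set L × β // IsOpen p.1 ∧ ∀ y ∈ p.1, R y p.2}
  have exists_meeting : ∀ O : Set L, IsOpen O → O.Nonempty → ∃ p : P, (p.1.1 ∩ O).Nonempty := by
    intro O hO hOne
    obtain ⟨x, hxO, b, hb⟩ := hR.inter_open_nonempty O hO hOne
    obtain ⟨V, hVR, hV, hxV⟩ := eventually_nhds_iff.1 hb
    exact ⟨⟨(V, b), hV, hVR⟩, x, hxV, hxO⟩
  have : Nonempty P := ⟨(exists_meeting univ isOpen_univ univ_nonempty).choose⟩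
  obtain ⟨_, _⟩ := exists_wellFoundedLT P
  have exists_first : ∀ y, ∃ p : P, ∀ q : P, y ∈ q.1.1 → y ∈ p.1.1 ∧ p ≤ q := by
    intro y
    by_cases hy : ∃ p : P, y ∈ p.1.1
    · obtain ⟨p, hyp, hmin⟩ := exists_minimal_of_wellFoundedLT (fun p : P => y ∈ p.1.1) hy
      exact ⟨p, fun q hq => ⟨hyp, (le_total p q).elim id (hmin hq)⟩⟩
    · exact ⟨Classical.arbitrary P, fun q hq => (hy ⟨q, hq⟩).elim⟩
  choose first h_first using exists_first
  refine ⟨fun y => (first y).1.2, dense_iff_inter_open.2 fun O hO hOne => ?_⟩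
  obtain ⟨p, ⟨x, hx⟩, hmin⟩ := exists_minimal_of_wellFoundedLT
    (fun p : P => (p.1.1 ∩ O).Nonempty) (exists_meeting O hO hOne)
  have first_eq : ∀ y ∈ p.1.1 ∩ O, first y = p := fun y hy =>
    have ⟨hy_first, hle⟩ := h_first y p hy.1
    hle.antisymm (hmin ⟨y, hy_first, hy.2⟩ hle)
  refine ⟨x, hx.2, ?_⟩
  filter_upwards [(p.2.1.inter hO).mem_nhds hx] with y hy
  rw [first_eq y hy, first_eq x hx]
  exact ⟨rfl, p.2.2 y hy.1⟩

theorem eventually_residual_of_dense_eventually_nhds {p : L → Prop}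
    (hp : Dense {x | ∀ᶠ y in 𝓝 x, p y}) : ∀ᶠ x in residual L, p x :=
  mem_of_superset (residual_of_dense_open isOpen_setOfPred_eventually_nhds hp)
    fun _ hx => hx.self_of_nhds

variable {W : Set (Z × L)} {ε : ℝ} {A : L → Set Z}

theorem exists_eventually_isShrinking [PseudoMetricSpace Z] (hW : IsOpen W) (hε : 0 < ε)
    {y : L} {C : Set Z} {z : Z} (hz : z ∈ interior C) (hzy : (z, y) ∈ W) :
    ∃ B, ∀ᶠ y' in 𝓝 y, IsShrinking W ε y' C B := by
  have hnhds : W ∩ interior C ×ˢ Set.univ ∈ 𝓝 (z, y) :=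
    (hW.inter (isOpen_interior.prod isOpen_univ)).mem_nhds ⟨hzy, hz, mem_univ y⟩
  obtain ⟨D, hD, V, hV, hDV⟩ := mem_nhds_prod_iff.1 hnhds
  obtain ⟨r, hr, hrD⟩ := Metric.nhds_basis_closedBall.mem_iff.1 hD
  have hmin : 0 < min r (ε / 2) := by positivity
  have hball : Metric.closedBall z (min r (ε / 2)) ⊆ D :=
    (Metric.closedBall_subset_closedBall (min_le_left _ _)).trans hrD
  refine ⟨Metric.closedBall z (min r (ε / 2)), ?_⟩
  filter_upwards [hV] with y' hy'
  exact
    { isClosed := Metric.isClosed_closedBall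
      isBounded := Metric.isBounded_closedBall
      diam_le := (Metric.diam_closedBall hmin.le).trans (by linarith [min_le_right r (ε / 2)])
      interior_nonempty := ⟨z, mem_interior_iff_mem_nhds.2 (Metric.closedBall_mem_nhds z hmin)⟩
      subset := fun w hw => interior_subset (hDV (mk_mem_prod (hball hw) hy')).2.1
      prod_mem := fun w hw => (hDV ⟨hball hw, hy'⟩).1 }

theorem exists_locallyConstant_isShrinking [PseudoMetricSpace Z] (hW : IsOpen W) (hWd : Dense W)
    (hε : 0 < ε) (hA : Dense {x | ∀ᶠ y in 𝓝 x, A y = A x ∧ (interior (A y)).Nonempty}) :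
    ∃ B : L → Set Z, Dense {x | ∀ᶠ y in 𝓝 x, B y = B x ∧ IsShrinking W ε y (A y) (B y)} := by
  refine exists_locallyConstant_selection (R := fun y => IsShrinking W ε y (A y))
    (dense_iff_inter_open.2 fun O hO hOne => ?_)
  obtain ⟨x, hxO, hx⟩ := hA.inter_open_nonempty O hO hOne
  obtain ⟨V, hVA, hV, hxV⟩ := eventually_nhds_iff.1 hx
  obtain ⟨⟨z, y⟩, ⟨hz, hyO, hyV⟩, hzy⟩ := hWd.inter_open_nonempty (interior (A x) ×ˢ (O ∩ V))
    (isOpen_interior.prod (hO.inter hV)) ((hVA x hxV).2.prod ⟨x, hxO, hxV⟩)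
  obtain ⟨B, hB⟩ := exists_eventually_isShrinking hW hε hz hzy
  refine ⟨y, hyO, B, ?_⟩
  filter_upwards [hB, hV.mem_nhds hyV] with y' hy' hy'V
  rwa [(hVA y' hy'V).1]

theorem eventually_residual_exists_forall_prod_mem [TopologicalSpace Z]
    [IsCompletelyPseudoMetrizableSpace Z] {W : ℕ → Set (Z × L)} (hW : ∀ n, IsOpen (W n))
    (hWd : ∀ n, Dense (W n)) {U : Set Z} (hU : IsOpen U) (hUne : U.Nonempty) :
    ∀ᶠ y in residual L, ∃ z ∈ U, ∀ n, (z, y) ∈ W n := by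
  let _ := upgradeIsCompletelyPseudoMetrizable Z
  choose! next h_next using fun (n : ℕ) (A : L → Set Z) =>
    exists_locallyConstant_isShrinking (A := A) (hW n) (hWd n) (Nat.one_div_pos_of_nat (n := n))
  let A : ℕ → L → Set Z := Nat.rec (fun _ => U) next
  have hA : ∀ n, Dense {x | ∀ᶠ y in 𝓝 x, A n y = A n x ∧ (interior (A n y)).Nonempty} := by
    intro n
    induction n with
    | zero => simp [A, hU.interior_eq, hUne]
    | succ n ih =>
      exact (h_next n (A n) ih).mono fun x hx => hx.mono fun y hy => ⟨hy.1, hy.2.interior_nonempty⟩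
  have hres : ∀ᶠ y in residual L, ∀ n,
      IsShrinking (W n) (1 / ((n : ℝ) + 1)) y (A n y) (A (n + 1) y) :=
    eventually_countable_forall.2 fun n => eventually_residual_of_dense_eventually_nhds <|
      (h_next n (A n) (hA n)).mono fun _ hx => hx.mono fun _ hy => hy.2
  filter_upwards [hres] with y hy
  obtain ⟨z, hz⟩ := nonempty_iInter_of_isShrinking tendsto_one_div_add_atTop_nhds_zero_nat
    (A := fun n => A n y) hy
  rw [mem_iInter] at hz
  exact ⟨z, (hy 0).subset (hz 0), fun n => (hy n).prod_mem z (hz n)⟩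

theorem baireSpace_prod [TopologicalSpace Z] [IsCompletelyPseudoMetrizableSpace Z]
    [BaireSpace L] : BaireSpace (Z × L) where
  baire_property W hW hWd := by
    refine dense_iff_inter_open.2 fun O hO ⟨⟨z, y⟩, hzy⟩ => ?_
    obtain ⟨U, V, hU, hV, hz, hy, hUV⟩ := isOpen_prod_iff.1 hO z y hzy
    have hdense := dense_of_mem_residual
      (eventually_residual_exists_forall_prod_mem hW hWd hU ⟨z, hz⟩)
    obtain ⟨y', hy'V, z', hz'U, hW'⟩ := hdense.inter_open_nonempty V hV ⟨y, hy⟩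
    exact ⟨(z', y'), hUV ⟨hz'U, hy'V⟩, mem_iInter.2 hW'⟩

end BaireProduct

section Skeletal

variable {K M : Type*} [TopologicalSpace K] [TopologicalSpace M] {φ : K → M}

/-- A map is *skeletal* if no nonempty open set has a nowhere dense image. For continuous maps with
dense range this suffices to transfer the Baire property to the codomain. -/
def IsSkeletalMap (φ : K → M) : Prop :=
  ∀ U : Set K, IsOpen U → U.Nonempty → (interior (closure (φ '' U))).Nonempty

theorem IsSkeletalMap.dense_preimage (hφ : IsSkeletalMap φ) {D : Set M} (hD : IsOpen D)
    (hDd : Dense D) : Dense (φ ⁻¹' D) := by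
  refine dense_iff_inter_open.2 fun U hU hUne => ?_
  obtain ⟨m, hm, hmD⟩ := hDd.inter_open_nonempty _ isOpen_interior (hφ U hU hUne)
  obtain ⟨_, hxD, x, hxU, rfl⟩ := mem_closure_iff.1 (interior_subset hm) D hD hmD
  exact ⟨x, hxU, hxD⟩

theorem IsSkeletalMap.baireSpace [BaireSpace K] (hφ : IsSkeletalMap φ) (hcont : Continuous φ)
    (hrange : DenseRange φ) : BaireSpace M where
  baire_property D hD hDd := by
    have hdense : Dense (⋂ n, φ ⁻¹' D n) := dense_iInter_of_isOpen
      (fun n => (hD n).preimage hcont) fun n => hφ.dense_preimage (hD n) (hDd n)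
    exact (hrange.dense_image hcont hdense).mono <| image_subset_iff.2 preimage_iInter.ge

end Skeletal

theorem exists_injective_forall_mem {ι R : Type*} [Finite ι] {S : ι → Set R}
    (hS : ∀ i, (S i).Infinite) : ∃ a : ι → R, Function.Injective a ∧ ∀ i, a i ∈ S i := by
  classical
  cases nonempty_fintype ι
  choose t htS htcard using fun i => (hS i).exists_subset_card_eq (Fintype.card ι)
  obtain ⟨a, ha, hat⟩ := (Finset.all_card_le_biUnion_card_iff_exists_injective t).1 fun s => by
    rcases s.eq_empty_or_nonempty with rfl | ⟨i, hi⟩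
    · exact Nat.zero_le _
    · calc s.card ≤ (t i).card := (htcard i).symm ▸ s.card_le_univ
        _ ≤ (s.biUnion t).card := Finset.card_le_card (Finset.subset_biUnion_of_mem t hi)
  exact ⟨a, ha, fun i => htS i (hat i)⟩

section Interpolation

variable {X Y ι : Type*} [TopologicalSpace X] [TopologicalSpace Y]

theorem exists_continuousMap_eq_one_eqOn_zero [CompletelyRegularSpace X] {x : X} {s : Set X}
    (hs : IsClosed s) (hx : x ∉ s) : ∃ φ : C(X, ℝ), φ x = 1 ∧ EqOn φ 0 s := by
  obtain ⟨f, hf, hfx, hfs⟩ := CompletelyRegularSpace.completely_regular x s hs hx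
  exact ⟨⟨fun y => 1 - (f y : ℝ), by fun_prop⟩, by simp [hfx], fun y hy => by simp [hfs hy]⟩

theorem exists_isCompact_forall_eqOn_mem_of_mem_nhds {f : C(X, Y)} {A : Set C(X, Y)}
    (hA : A ∈ 𝓝 f) : ∃ K : Set X, IsCompact K ∧ ∀ g : C(X, Y), EqOn g f K → g ∈ A := by
  obtain ⟨S, hSfin, hS, hSA⟩ := ContinuousMap.mem_nhds_iff.1 hA
  refine ⟨⋃ s ∈ S, s.1, hSfin.isCompact_biUnion fun s hs => (hS s.1 s.2 hs).1, fun g hg => hSA ?_⟩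
  intro K U hKU
  exact (hS K U hKU).2.2.congr (hg.mono (subset_biUnion_of_mem (u := Prod.fst) hKU)).symm

theorem isCompletelyPseudoMetrizableSpace_continuousMap [WeaklyLocallyCompactSpace X]
    [SigmaCompactSpace X] [IsCompletelyPseudoMetrizableSpace Y] :
    IsCompletelyPseudoMetrizableSpace C(X, Y) := by
  let _ := upgradeIsCompletelyPseudoMetrizable Y
  infer_instance

variable [T35Space X] [Finite ι] {a : ι → X} {K : Set X}

theorem exists_continuousMap_apply_eq_single [DecidableEq ι] (ha : Function.Injective a)
    (hK : IsClosed K) (haK : ∀ i, a i ∉ K) :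
    ∃ φ : ι → C(X, ℝ), (∀ i j, φ i (a j) = Pi.single (M := fun _ => ℝ) i 1 j) ∧
      ∀ i, EqOn (φ i) 0 K := by
  have exists_bump : ∀ i, ∃ φ : C(X, ℝ), φ (a i) = 1 ∧ EqOn φ 0 (K ∪ a '' {i}ᶜ) := fun i =>
    exists_continuousMap_eq_one_eqOn_zero (hK.union (toFinite _).isClosed) <| by
      simp [haK, ha.eq_iff]
  choose φ hφ hφ0 using exists_bump
  refine ⟨φ, fun i j => ?_, fun i => (hφ0 i).mono subset_union_left⟩
  rcases eq_or_ne j i with rfl | hji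
  · simp [hφ]
  · rw [Pi.single_eq_of_ne hji]
    exact hφ0 i (Or.inr ⟨j, hji, rfl⟩)

variable [AddCommGroup Y] [Module ℝ Y] [IsTopologicalAddGroup Y] [ContinuousSMul ℝ Y]

theorem exists_continuousMap_interpolation (ha : Function.Injective a) (hK : IsClosed K)
    (haK : ∀ i, a i ∉ K) (v : ι → Y) : ∃ u : C(X, Y), (∀ i, u (a i) = v i) ∧ EqOn u 0 K := by
  classical
  cases nonempty_fintype ι
  obtain ⟨φ, hφ, hφK⟩ := exists_continuousMap_apply_eq_single ha hK haK
  refine ⟨⟨fun x => ∑ i, φ i x • v i, by fun_prop⟩, fun i => ?_, fun x hx => ?_⟩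
  · simp [hφ, Pi.single_apply]
  · simp [hφK _ hx]

theorem isOpenMap_continuousMap_eval (ha : Function.Injective a) :
    IsOpenMap fun (g : C(X, Y)) i => g (a i) := by
  classical
  cases nonempty_fintype ι
  obtain ⟨φ, hφ, -⟩ := exists_continuousMap_apply_eq_single ha isClosed_empty (by simp)
  refine IsOpenMap.of_sections fun g => ?_
  let lift : (ι → Y) → C(X, Y) := fun v =>
    ⟨fun x => g x + ∑ i, φ i x • (v i - g (a i)), by fun_prop⟩
  have lift_continuous : Continuous lift :=
    ContinuousMap.continuous_of_continuous_uncurry _ <| by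
      simp only [lift, Function.uncurry_def, ContinuousMap.coe_mk]
      fun_prop
  refine ⟨lift, lift_continuous.continuousAt, by ext; simp [lift], fun v => funext fun i => ?_⟩
  simp [lift, hφ, Pi.single_apply]

theorem exists_comp_eq_on_finset {g : C(ℝ, Y)} {A : Set C(ℝ, Y)} (hA : A ∈ 𝓝 g)
    {F : Finset X} {b : F → ℝ} {h : X → Y} (hg : ∀ x, g (b x) = h x) (G : Finset X) :
    ∃ g' ∈ A, ∃ f : C(X, ℝ), (∀ x : F, f x = b x) ∧ ∀ x ∈ G, g' (f x) = h x := by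
  classical
  obtain ⟨K, hK, hKA⟩ := exists_isCompact_forall_eqOn_mem_of_mem_nhds hA
  have hKb : IsCompact (K ∪ range b) := hK.union (finite_range b).isCompact
  have hinf : (K ∪ range b)ᶜ.Infinite := fun hfin =>
    noncompact_univ ℝ (union_compl_self (K ∪ range b) ▸ hKb.union hfin.isCompact)
  obtain ⟨c, hc, hcK⟩ := exists_injective_forall_mem fun _ : ↥(G \ F) => hinf
  have hval : Function.Injective (Sum.elim (fun x : F => x.1) fun x : ↥(G \ F) => x.1) :=
    Subtype.val_injective.sumElim Subtype.val_injective fun x y hxy =>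
      (Finset.mem_sdiff.1 y.2).2 (hxy ▸ x.2)
  obtain ⟨f, hf, -⟩ := exists_continuousMap_interpolation hval isClosed_empty (by simp)
    (Sum.elim b c)
  obtain ⟨u, hu, huK⟩ := exists_continuousMap_interpolation hc hKb.isClosed hcK
    fun x => h x - g (c x)
  refine ⟨g + u, hKA _ fun t ht => by simp [huK (Or.inl ht)], f, fun x => hf (Sum.inl x),
    fun x hxG => ?_⟩
  by_cases hxF : x ∈ F
  · have hfx : f x = b ⟨x, hxF⟩ := hf (Sum.inl ⟨x, hxF⟩)
    simp [hfx, huK (Or.inr (mem_range_self _)), hg]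
  · have hx : x ∈ G \ F := Finset.mem_sdiff.2 ⟨hxG, hxF⟩
    have hfx : f x = c ⟨x, hx⟩ := hf (Sum.inr ⟨x, hx⟩)
    simp [hfx, hu]

end Interpolation

section FunctionSpace

variable {X Y : Type*} [TopologicalSpace Y]

theorem exists_finset_of_mem_nhds {M : Set (X → Y)} {h : M} {U : Set M} (hU : U ∈ 𝓝 h) :
    ∃ (F : Finset X) (V : X → Set Y), (∀ x, V x ∈ 𝓝 (h.1 x)) ∧
      ∀ h' : M, (∀ x ∈ F, h'.1 x ∈ V x) → h' ∈ U := by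
  obtain ⟨O, hO, hOU⟩ := mem_nhds_subtype .. |>.1 hU
  rw [nhds_pi] at hO
  obtain ⟨F, V, hV, hVO⟩ := mem_pi'.1 hO
  exact ⟨F, V, hV, fun h' hh' => hOU (hVO hh')⟩

theorem mem_closure_of_forall_finset {M : Set (X → Y)} {S : Set M} {h : M}
    (hS : ∀ G : Finset X, ∃ h' ∈ S, ∀ x ∈ G, h'.1 x = h.1 x) : h ∈ closure S := by
  refine mem_closure_iff_nhds.2 fun U hU => ?_
  obtain ⟨G, V, hV, hVU⟩ := exists_finset_of_mem_nhds hU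
  obtain ⟨h', hh'S, hh'⟩ := hS G
  exact ⟨h', hVU h' fun x hx => hh' x hx ▸ mem_of_mem_nhds (hV x), hh'S⟩

variable {L : Set (X → ℝ)} {M : Set (X → Y)}

/-- The composition map `(g, f) ↦ g ∘ f` from `C(ℝ, Y) × L` to `M`, for sets of functions
`L ⊆ ℝ^X` and `M ⊆ Y^X`, regarded as subspaces of the products. -/
def compMap (hLM : ∀ f ∈ L, ∀ g : C(ℝ, Y), g ∘ f ∈ M) (p : C(ℝ, Y) × L) : M :=
  ⟨p.1 ∘ p.2.1, hLM p.2.1 p.2.2 p.1⟩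

variable (hLM : ∀ f ∈ L, ∀ g : C(ℝ, Y), g ∘ f ∈ M)

theorem continuous_compMap : Continuous (compMap hLM) :=
  (continuous_pi fun x => continuous_fst.eval <|
    (continuous_apply x).comp (continuous_subtype_val.comp continuous_snd)).subtype_mk _

variable [TopologicalSpace X] [T35Space X] [AddCommGroup Y] [Module ℝ Y]
  [IsTopologicalAddGroup Y] [ContinuousSMul ℝ Y]

theorem mem_closure_image_compMap (hL : ∀ f : C(X, ℝ), ⇑f ∈ L) {g : C(ℝ, Y)}
    {A : Set C(ℝ, Y)} (hA : A ∈ 𝓝 g) {F : Finset X} {b : F → ℝ} {h : M}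
    (hg : ∀ x, g (b x) = h.1 x) :
    h ∈ closure (compMap hLM '' (A ×ˢ {f | ∀ x : F, f.1 x = b x})) := by
  refine mem_closure_of_forall_finset fun G => ?_
  obtain ⟨g', hg'A, f, hfb, hg'f⟩ := exists_comp_eq_on_finset hA hg G
  exact ⟨compMap hLM (g', ⟨f, hL f⟩), mem_image_of_mem _ ⟨hg'A, hfb⟩, hg'f⟩

theorem denseRange_compMap (hL : ∀ f : C(X, ℝ), ⇑f ∈ L) : DenseRange (compMap hLM) := fun _ =>
  closure_mono (image_subset_range _ _) <|
    mem_closure_image_compMap hLM hL (g := 0) (F := ∅) (b := isEmptyElim) univ_mem isEmptyElim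

theorem isSkeletalMap_compMap (hL : ∀ f : C(X, ℝ), ⇑f ∈ L) (hM : ∀ h : C(X, Y), ⇑h ∈ M) :
    IsSkeletalMap (compMap hLM) := by
  rintro O hO ⟨⟨g, f⟩, hgf⟩
  obtain ⟨A, B, hA, hB, hgA, hfB, hAB⟩ := isOpen_prod_iff.1 hO g f hgf
  obtain ⟨F, V, hV, hVB⟩ := exists_finset_of_mem_nhds (hB.mem_nhds hfB)
  obtain ⟨b, hb, hbV⟩ := exists_injective_forall_mem fun x : F => infinite_of_mem_nhds _ (hV x)
  have hbB : {f : L | ∀ x : F, f.1 x = b x} ⊆ B := fun f hf =>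
    hVB f fun x hx => hf ⟨x, hx⟩ ▸ hbV ⟨x, hx⟩
  let U : Set M := (fun h (x : F) => h.1 x) ⁻¹' ((fun (g : C(ℝ, Y)) (x : F) => g (b x)) '' A)
  have hU : IsOpen U := (isOpenMap_continuousMap_eval hb A hA).preimage <|
    continuous_pi fun x => (continuous_apply x.1).comp continuous_subtype_val
  have hUcl : U ⊆ closure (compMap hLM '' O) := by
    rintro h ⟨g', hg'A, hg'⟩
    exact closure_mono (image_mono ((prod_mono_right hbB).trans hAB)) <|
      mem_closure_image_compMap hLM hL (hA.mem_nhds hg'A) (congrFun hg')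
  obtain ⟨u, hu, -⟩ := exists_continuousMap_interpolation (a := fun x : F => x.1)
    Subtype.val_injective isClosed_empty (by simp) fun x => g (b x)
  exact ⟨⟨u, hM u⟩, interior_maximal hUcl hU ⟨g, hgA, funext fun x => (hu x).symm⟩⟩

include hLM in
theorem baireSpace_of_comp_mem [IsCompletelyPseudoMetrizableSpace Y] [BaireSpace L]
    (hL : ∀ f : C(X, ℝ), ⇑f ∈ L) (hM : ∀ h : C(X, Y), ⇑h ∈ M) : BaireSpace M :=
  have := isCompletelyPseudoMetrizableSpace_continuousMap (X := ℝ) (Y := Y)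
  have := baireSpace_prod (Z := C(ℝ, Y)) (L := L)
  (isSkeletalMap_compMap hLM hL hM).baireSpace (continuous_compMap hLM)
    (denseRange_compMap hLM hL)

end FunctionSpace

section BaireClasses

variable {X Y Z : Type*} [TopologicalSpace X] [TopologicalSpace Y] [TopologicalSpace Z]
  {α : Ordinal.{0}} {f : X → Y} {g : Y → Z}

theorem mem_baireClass_of_continuous (hf : Continuous f) (α : Ordinal.{0}) :
    f ∈ BaireClass X Y α := by
  rw [BaireClass]
  split_ifs with hα
  · exact hf
  · exact ⟨fun _ => f, fun _ => Or.inl hf, fun _ => tendsto_const_nhds⟩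

theorem comp_mem_baireClass (hg : Continuous g) (hf : f ∈ BaireClass X Y α) :
    g ∘ f ∈ BaireClass X Z α := by
  induction α using WellFoundedLT.induction generalizing f with
  | ind α ih =>
    rw [BaireClass] at hf ⊢
    split_ifs at hf ⊢ with hα
    · exact hg.comp hf
    · obtain ⟨s, hs, hlim⟩ := hf
      refine ⟨fun n => g ∘ s n, fun n => ?_, fun x => (hg.tendsto _).comp (hlim x)⟩
      exact (hs n).imp hg.comp fun ⟨β, hβ, hsβ⟩ => ⟨β, hβ, ih β hβ hsβ⟩

theorem mem_baireFun_of_continuous (hf : Continuous f) (α : Ordinal.{0}) :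
    f ∈ BaireFun X Y α := by
  rw [BaireFun]
  split_ifs with hα
  · exact mem_biUnion (omega_pos 1) (mem_baireClass_of_continuous hf 0)
  · exact mem_baireClass_of_continuous hf α

theorem comp_mem_baireFun (hg : Continuous g) (hf : f ∈ BaireFun X Y α) :
    g ∘ f ∈ BaireFun X Z α := by
  rw [BaireFun] at hf ⊢
  split_ifs at hf ⊢ with hα
  · obtain ⟨β, hβ, hfβ⟩ := mem_iUnion₂.1 hf
    exact mem_biUnion hβ (comp_mem_baireClass hg hfβ)
  · exact comp_mem_baireClass hg hf

end BaireClasses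

theorem statement7_general {X Y : Type*} [TopologicalSpace X] [T35Space X]
    [AddCommGroup Y] [Module ℝ Y] [TopologicalSpace Y] [IsTopologicalAddGroup Y]
    [ContinuousSMul ℝ Y] [IsCompletelyPseudoMetrizableSpace Y] (α : Ordinal.{0})
    [BaireSpace (BaireFun X ℝ α)] : BaireSpace (BaireFun X Y α) :=
  baireSpace_of_comp_mem (fun _ hf g => comp_mem_baireFun g.continuous hf)
    (fun f => mem_baireFun_of_continuous f.continuous α)
    (fun h => mem_baireFun_of_continuous h.continuous α)

theorem statement7 {X : Type*} [TopologicalSpace X] [T35Space X]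
    (α : Ordinal.{0}) (hα : α ≤ ω_ 1) :
    BaireSpace ↥(BaireFun X ℝ α) ↔
      ∀ (Y : Type) (_ : NormedAddCommGroup Y) (_ : NormedSpace ℝ Y) (_ : CompleteSpace Y),
        BaireSpace ↥(BaireFun X Y α) :=
  ⟨fun _ _ _ _ _ => statement7_general α, fun h => h ℝ inferInstance inferInstance inferInstance⟩
end
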